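/- arXiv:2312.09083 — 5 statements merged into one kernel-verified Lean document; each statement's English description precedes it below -/
import Mathlib

section
/- Let n ≥ 1, G ∈ 𝒢_{n,1}, Σ a topological space, and μ a Borel probability measure on Σ. Then the set 𝕍_*(G) of compliant pairs satisfying the averaged-controllability rank criterion is an open subset of 𝕍(G) in the uniform topology. -/
open MeasureTheory BoundedContinuousFunction

/-- Node type: `none` is the control node `β`, `some i` is the state node `α_i`. -/
abbrev Node (n : ℕ) := Option (Fin n)

/-- The set `𝕍(G)` of compliant pairs, inside the product of the spaces of bounded
continuous matrix- and vector-valued functions on `S` (each with the uniform topology). -/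
def VG (n : ℕ) (E : Set (Node n × Node n)) (S : Type*) [TopologicalSpace S] :
    Set ((S →ᵇ (Fin n → Fin n → ℝ)) × (S →ᵇ (Fin n → ℝ))) :=
  {p | (∀ σ (i j : Fin n), ((some j : Node n), (some i : Node n)) ∉ E → p.1 σ i j = 0) ∧
       (∀ σ (i : Fin n), ((none : Node n), (some i : Node n)) ∉ E → p.2 σ i = 0)}

/-- The averaged-controllability rank criterion for a pair in `𝕍(G)`. -/
def RankCriterionB {n : ℕ} {S : Type*} [TopologicalSpace S] [MeasurableSpace S]
    (μ : Measure S) (p : (S →ᵇ (Fin n → Fin n → ℝ)) × (S →ᵇ (Fin n → ℝ))) : Prop :=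
  Submodule.span ℝ {x : Fin n → ℝ |
    ∃ k : ℕ, x = ∫ σ, (Matrix.of (p.1 σ) ^ k).mulVec (p.2 σ) ∂μ} = ⊤

def WeaklyConnected {V : Type*} (E : Set (V × V)) : Prop :=
  ∀ u v : V, ∃ (k : ℕ) (w : ℕ → V), w 0 = u ∧ w k = v ∧
    ∀ t < k, (w t, w (t + 1)) ∈ E ∨ (w (t + 1), w t) ∈ E

/-- Membership in the class `𝒢_{n,1}`. -/
def MemG (n : ℕ) (E : Set (Node n × Node n)) : Prop :=
  (∀ e ∈ E, e.2 ≠ (none : Node n)) ∧ WeaklyConnected E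

theorem aux_bound {n : ℕ} (A : Fin n → Fin n → ℝ) (b : Fin n → ℝ) (M : ℝ)
    (hA : ‖A‖ ≤ M) (hb : ‖b‖ ≤ M) (k : ℕ) :
    ‖(Matrix.of A ^ k).mulVec b‖ ≤ (n * M) ^ k * M := by
  have hM : 0 ≤ M := (norm_nonneg _).trans hA
  induction k with
  | zero => simpa using hb
  | succ k ih =>
    rw [pow_succ', ← Matrix.mulVec_mulVec]
    refine (pi_norm_le_iff_of_nonneg (by positivity)).2 fun i => ?_
    simp only [Matrix.mulVec, dotProduct, Matrix.of_apply] at ih ⊢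
    refine (norm_sum_le _ _).trans ?_
    refine (Finset.sum_le_card_nsmul _ _ (M * ((n * M) ^ k * M)) fun j _ => ?_).trans ?_
    · rw [norm_mul]
      refine mul_le_mul ?_ ?_ (norm_nonneg _) hM
      · exact ((norm_le_pi_norm (A i) j).trans (norm_le_pi_norm A i)).trans hA
      · exact (norm_le_pi_norm _ j).trans ih
    · simp only [Finset.card_univ, Fintype.card_fin, nsmul_eq_mul]
      apply le_of_eq
      ring

theorem aux_cont {n : ℕ} (k : ℕ) : Continuous
    (fun q : (Fin n → Fin n → ℝ) × (Fin n → ℝ) => (Matrix.of q.1 ^ k).mulVec q.2) := by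
  have h : Continuous (fun q : (Fin n → Fin n → ℝ) × (Fin n → ℝ) => Matrix.of q.1) :=
    continuous_fst
  exact (h.pow k).matrix_mulVec continuous_snd

theorem aux_int {n : ℕ} {S : Type*} [TopologicalSpace S] [MeasurableSpace S] [BorelSpace S]
    (μ : Measure S) [IsProbabilityMeasure μ] (k : ℕ) :
    Continuous (fun p : (S →ᵇ (Fin n → Fin n → ℝ)) × (S →ᵇ (Fin n → ℝ)) =>
      ∫ σ, (Matrix.of (p.1 σ) ^ k).mulVec (p.2 σ) ∂μ) := by
  rw [continuous_iff_continuousAt]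
  intro p₀
  refine continuousAt_of_dominated
    (bound := fun _ => (n * (‖p₀‖ + 1)) ^ k * (‖p₀‖ + 1)) ?_ ?_ (integrable_const _) ?_
  · refine Filter.Eventually.of_forall fun p => ?_
    exact ((aux_cont k).comp (p.1.continuous.prodMk p.2.continuous)).aestronglyMeasurable
  · have h : ∀ᶠ p : (S →ᵇ (Fin n → Fin n → ℝ)) × (S →ᵇ (Fin n → ℝ)) in nhds p₀,
        ‖p‖ < ‖p₀‖ + 1 :=
      continuous_norm.continuousAt.eventually_lt continuousAt_const (by simp)
    filter_upwards [h] with p hp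
    refine Filter.Eventually.of_forall fun σ => aux_bound _ _ _ ?_ ?_ k
    · exact ((p.1.norm_coe_le_norm σ).trans (norm_fst_le p)).trans hp.le
    · exact ((p.2.norm_coe_le_norm σ).trans (norm_snd_le p)).trans hp.le
  · refine Filter.Eventually.of_forall fun σ => Continuous.continuousAt ?_
    refine (aux_cont k).comp (Continuous.prodMk ?_ ?_)
    · exact (continuous_eval_const σ).comp continuous_fst
    · exact (continuous_eval_const σ).comp continuous_snd

theorem aux_open {n : ℕ} {X : Type*} [TopologicalSpace X] (F : ℕ → X → Fin n → ℝ)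
    (hF : ∀ k, Continuous (F k)) :
    IsOpen {p | Submodule.span ℝ {x : Fin n → ℝ | ∃ k : ℕ, x = F k p} = ⊤} := by
  have hr : ∀ p, {x : Fin n → ℝ | ∃ k : ℕ, x = F k p} = Set.range (fun k => F k p) := by
    intro p
    ext x
    simp [eq_comm]
  simp only [hr]
  rw [isOpen_iff_mem_nhds]
  intro p₀ hp₀
  obtain ⟨κ, a, -, hspan, hli⟩ := exists_linearIndependent' ℝ (fun k => F k p₀)
  rw [Set.mem_setOf_eq] at hp₀
  rw [hp₀] at hspan
  have : Finite κ := hli.finite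
  have := Fintype.ofFinite κ
  have hcard : Fintype.card κ = Module.finrank ℝ (Fin n → ℝ) := by
    rw [← finrank_span_eq_card hli, hspan, finrank_top]
  have hc : Continuous (fun p => fun i : κ => F (a i) p) := continuous_pi fun i => hF (a i)
  have ho := (isOpen_setOf_linearIndependent (𝕜 := ℝ) (E := Fin n → ℝ) (ι := κ)).preimage hc
  filter_upwards [ho.mem_nhds (x := p₀) hli] with p hp
  have h2 : LinearIndependent ℝ (fun i : κ => F (a i) p) := hp
  have h3 := h2.span_eq_top_of_card_eq_finrank' hcard
  rw [eq_top_iff, ← h3]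
  apply Submodule.span_mono
  rintro _ ⟨i, rfl⟩
  exact ⟨a i, rfl⟩

/-- the set `𝕍_*(G)` of averaged-controllable compliant pairs is open
in `𝕍(G)` for the uniform topology. -/
theorem stmt2 {n : ℕ} (hn : 1 ≤ n) (E : Set (Node n × Node n)) (hG : MemG n E)
    (S : Type*) [TopologicalSpace S] [MeasurableSpace S] [BorelSpace S]
    (μ : Measure S) [IsProbabilityMeasure μ] :
    IsOpen {q : ↥(VG n E S) | RankCriterionB μ q.val} := by
  exact aux_open _ (fun k => (aux_int μ k).comp continuous_subtype_val)
end

section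
/- Let n ≥ 1, G ∈ 𝒢_{n,1}, Σ a topological space, and μ a Borel probability measure on Σ. If the set 𝕍_*(G) of compliant pairs satisfying the averaged-controllability rank criterion is nonempty, then 𝕍_*(G) is dense in 𝕍(G) in the uniform topology. -/
open MeasureTheory BoundedContinuousFunction

/-- component -/
noncomputable def bcomp {n : ℕ} {S : Type*} [TopologicalSpace S]
    (b : S →ᵇ (Fin n → ℝ)) (i : Fin n) : S →ᵇ ℝ :=
  BoundedContinuousFunction.ofNormedAddCommGroup (fun σ => b σ i)
    ((continuous_apply i).comp b.continuous) ‖b‖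
    (fun σ => (norm_le_pi_norm (b σ) i).trans (b.norm_coe_le_norm σ))

/-- matrix component -/
noncomputable def mcomp {n : ℕ} {S : Type*} [TopologicalSpace S]
    (A : S →ᵇ (Fin n → Fin n → ℝ)) (i j : Fin n) : S →ᵇ ℝ :=
  BoundedContinuousFunction.ofNormedAddCommGroup (fun σ => A σ i j)
    ((continuous_apply j).comp ((continuous_apply i).comp A.continuous)) ‖A‖
    (fun σ => (norm_le_pi_norm (A σ i) j).trans
      ((norm_le_pi_norm (A σ) i).trans (A.norm_coe_le_norm σ)))

lemma poly_entry {n : ℕ} {S : Type*} [TopologicalSpace S]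
    (p r : (S →ᵇ (Fin n → Fin n → ℝ)) × (S →ᵇ (Fin n → ℝ))) (k : ℕ) :
    ∀ i, ∃ P : Polynomial (S →ᵇ ℝ), ∀ (t : ℝ) (σ : S),
      (Matrix.of ((p + t • r).1 σ) ^ k).mulVec ((p + t • r).2 σ) i
        = (P.eval (BoundedContinuousFunction.const S t)) σ := by
  induction k with
  | zero =>
    intro i
    refine ⟨Polynomial.C (bcomp p.2 i) + Polynomial.X * Polynomial.C (bcomp r.2 i), ?_⟩
    intro t σ
    simp [bcomp, mul_comm]
  | succ k ih =>
    intro i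
    choose P hP using ih
    refine ⟨∑ j, (Polynomial.C (mcomp p.1 i j) + Polynomial.X * Polynomial.C (mcomp r.1 i j)) * P j, ?_⟩
    intro t σ
    rw [pow_succ', ← Matrix.mulVec_mulVec, Matrix.mulVec, dotProduct, Polynomial.eval_finsetSum,
      BoundedContinuousFunction.coe_sum, Finset.sum_apply]
    refine Finset.sum_congr rfl fun j _ => ?_
    rw [hP]
    simp [mcomp, mul_comm t]

lemma poly_int {S : Type*} [TopologicalSpace S] [MeasurableSpace S] [BorelSpace S]
    (μ : Measure S) [IsProbabilityMeasure μ] (P : Polynomial (S →ᵇ ℝ)) :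
    ∃ Q : Polynomial ℝ, ∀ t : ℝ,
      ∫ σ, (P.eval (BoundedContinuousFunction.const S t)) σ ∂μ = Q.eval t := by
  induction P using Polynomial.induction_on' with
  | add P P' h h' =>
    obtain ⟨Q, hQ⟩ := h
    obtain ⟨Q', hQ'⟩ := h'
    refine ⟨Q + Q', fun t => ?_⟩
    rw [Polynomial.eval_add, Polynomial.eval_add, ← hQ, ← hQ',
      ← integral_add (BoundedContinuousFunction.integrable μ _)
        (BoundedContinuousFunction.integrable μ _)]
    rfl
  | monomial m a =>
    refine ⟨Polynomial.monomial m (∫ σ, a σ ∂μ), fun t => ?_⟩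
    simp [Polynomial.eval_monomial, integral_mul_const]

lemma poly_avg {n : ℕ} {S : Type*} [TopologicalSpace S] [MeasurableSpace S] [BorelSpace S]
    (μ : Measure S) [IsProbabilityMeasure μ]
    (p r : (S →ᵇ (Fin n → Fin n → ℝ)) × (S →ᵇ (Fin n → ℝ))) (k : ℕ) (i : Fin n) :
    ∃ Q : Polynomial ℝ, ∀ t : ℝ,
      (∫ σ, (Matrix.of ((p + t • r).1 σ) ^ k).mulVec ((p + t • r).2 σ) ∂μ) i = Q.eval t := by
  choose P hP using poly_entry p r k
  obtain ⟨Q, hQ⟩ := poly_int μ (P i)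
  refine ⟨Q, fun t => ?_⟩
  rw [MeasureTheory.eval_integral, ← hQ]
  · exact integral_congr_ae (Filter.Eventually.of_forall fun σ => hP i t σ)
  · intro j
    refine (BoundedContinuousFunction.integrable μ
      ((P j).eval (BoundedContinuousFunction.const S t))).congr
      (Filter.Eventually.of_forall fun σ => (hP j t σ).symm)

/-- if nonempty, the set `𝕍_*(G)` of averaged-controllable compliant
pairs is dense in `𝕍(G)` for the uniform topology. -/
theorem stmt3 {n : ℕ} (hn : 1 ≤ n) (E : Set (Node n × Node n)) (hG : MemG n E)
    (S : Type*) [TopologicalSpace S] [MeasurableSpace S] [BorelSpace S]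
    (μ : Measure S) [IsProbabilityMeasure μ]
    (hne : ∃ q : ↥(VG n E S), RankCriterionB μ q.val) :
    Dense {q : ↥(VG n E S) | RankCriterionB μ q.val} := by
  obtain ⟨q, hq⟩ := hne
  intro p
  let r := q.val - p.val
  let γ : ℝ → ↥(VG n E S) := fun t => ⟨p.val + t • r, by
    refine ⟨fun σ i j h => ?_, fun σ i h => ?_⟩
    · have h1 := p.2.1 σ i j h
      have h2 := q.2.1 σ i j h
      simp [r, h1, h2]
    · have h1 := p.2.2 σ i h
      have h2 := q.2.2 σ i h
      simp [r, h1, h2]⟩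
  have hγ : Continuous γ := by
    refine Continuous.subtype_mk ?_ _
    fun_prop
  have hγ0 : γ 0 = p := Subtype.ext (by change p.val + (0 : ℝ) • r = p.val; rw [zero_smul ℝ r, add_zero])
  have hγ1 : γ 1 = q := Subtype.ext (by simp [γ, r])
  choose Q hQ using fun k i => poly_avg μ p.val r k i
  let x : ℝ → ℕ → Fin n → ℝ := fun t k =>
    ∫ σ, (Matrix.of ((γ t).val.1 σ) ^ k).mulVec ((γ t).val.2 σ) ∂μ
  have hx : ∀ t k i, x t k i = (Q k i).eval t := fun t k i => hQ k i t
  have hcrit : ∀ t, RankCriterionB μ (γ t).val ↔ Submodule.span ℝ (Set.range (x t)) = ⊤ := by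
    intro t
    have : {y : Fin n → ℝ | ∃ k : ℕ, y =
        ∫ σ, (Matrix.of ((γ t).val.1 σ) ^ k).mulVec ((γ t).val.2 σ) ∂μ} = Set.range (x t) := by
      ext y
      simp [x, eq_comm]
    rw [RankCriterionB, this]
  rw [← hγ1, hcrit] at hq
  obtain ⟨κ, hκ⟩ : ∃ κ : Fin n → ℕ, LinearIndependent ℝ (fun a => x 1 (κ a)) := by
    obtain ⟨f, hf, -, hl⟩ := Submodule.exists_fun_fin_finrank_span_eq ℝ (Set.range (x 1))
    have hfin : n = Module.finrank ℝ (Submodule.span ℝ (Set.range (x 1))) := by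
      rw [hq]; simp
    choose κ hκ using hf
    refine ⟨fun a => κ (Fin.cast hfin a), ?_⟩
    have := hl.comp (Fin.cast hfin) (Fin.cast_injective hfin)
    have he : (fun a => x 1 (κ (Fin.cast hfin a))) = f ∘ Fin.cast hfin := funext fun a => hκ _
    rw [he]
    exact this
  let M : Matrix (Fin n) (Fin n) (Polynomial ℝ) := Matrix.of fun a i => Q (κ a) i
  have hM : ∀ t, M.det.eval t = (Matrix.of fun a i => x t (κ a) i).det := by
    intro t
    rw [← Polynomial.coe_evalRingHom, RingHom.map_det]
    congr 1
    ext a i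
    simp [M, hx]
  have hD1 : M.det.eval 1 ≠ 0 := by
    rw [hM]
    have : IsUnit (Matrix.of fun a i => x 1 (κ a) i) :=
      Matrix.linearIndependent_rows_iff_isUnit.mp hκ
    exact ((Matrix.isUnit_iff_isUnit_det _).mp this).ne_zero
  have hD : M.det ≠ 0 := by
    rintro h
    simp [h] at hD1
  have hfin : {t : ℝ | M.det.IsRoot t}.Finite := Polynomial.finite_setOfPred_isRoot hD
  have hdense : Dense ({t : ℝ | M.det.IsRoot t}ᶜ) := Set.Countable.dense_compl ℝ (Set.Finite.countable hfin)
  have h0 := hdense 0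
  rw [← hγ0]
  refine map_mem_closure hγ h0 ?_
  intro t ht
  change RankCriterionB μ (γ t).val
  rw [hcrit]
  have hu : IsUnit (Matrix.of fun a i => x t (κ a) i) := by
    rw [Matrix.isUnit_iff_isUnit_det, isUnit_iff_ne_zero, ← hM]
    exact ht
  have hl : LinearIndependent ℝ (fun a => x t (κ a)) :=
    Matrix.linearIndependent_rows_iff_isUnit.mpr hu
  have := hl.span_eq_top_of_card_eq_finrank' (by simp)
  rw [eq_top_iff, ← this]
  apply Submodule.span_mono
  rintro _ ⟨a, rfl⟩
  exact ⟨κ a, rfl⟩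
end

section
/- Let n ≥ 1 and let G ∈ 𝒢_{n,1} be such that its core G* does not contain a directed spanning path. Then for every topological space Σ, every Borel probability measure μ on Σ, and every compliant pair (A, b) ∈ 𝕍(G), the ℝ-linear span of { ∫_Σ A(σ)^k b(σ) dμ(σ) : k ∈ ℕ } is a proper subspace of ℝⁿ; in particular, no compliant pair satisfies the averaged-controllability rank criterion. -/
open MeasureTheory

/-- `w` is a walk of length `k` from `u` to `v` in the digraph with edge set `E`. -/
def IsWalk {V : Type*} (E : Set (V × V)) (k : ℕ) (w : ℕ → V) (u v : V) : Prop :=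
  w 0 = u ∧ w k = v ∧ ∀ t < k, (w t, w (t + 1)) ∈ E

/-- A path is a walk with no repeated node. -/
def IsPath {V : Type*} (E : Set (V × V)) (k : ℕ) (w : ℕ → V) (u v : V) : Prop :=
  IsWalk E k w u v ∧ ∀ s ≤ k, ∀ t ≤ k, w s = w t → s = t

/-- A cycle of length `k ≥ 1` from `u` to itself, all nodes pairwise distinct except
the coinciding endpoints. -/
def IsCycle {V : Type*} (E : Set (V × V)) (k : ℕ) (w : ℕ → V) (u : V) : Prop :=
  1 ≤ k ∧ IsWalk E k w u u ∧ ∀ s < k, ∀ t < k, w s = w t → s = t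

def Reachable {V : Type*} (E : Set (V × V)) (u v : V) : Prop :=
  ∃ k w, IsWalk E k w u v

/-- `u` lies on a cycle of the digraph. -/
def OnCycle {V : Type*} (E : Set (V × V)) (u : V) : Prop :=
  ∃ k w, IsCycle E k w u

/-- `V⁺_cyc`: nodes reachable by a walk from some node lying on a cycle. -/
def CycSucc {V : Type*} (E : Set (V × V)) : Set V :=
  {v | ∃ u, OnCycle E u ∧ Reachable E u v}

/-- The node set of the core relative to a node set `N`: `N \ V⁺_cyc`. -/
def CoreOn {W : Type*} (N : Set W) (F : Set (W × W)) : Set W := N \ CycSucc F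

/-- The node set `V*` of the core `G*` of `G`. -/
def CoreNodes (n : ℕ) (E : Set (Node n × Node n)) : Set (Node n) :=
  CoreOn Set.univ E

/-- The core of `G` contains a directed spanning path: a path of `G` whose node set
is exactly `V*`. -/
def HasCoreSpanningPath (n : ℕ) (E : Set (Node n × Node n)) : Prop :=
  ∃ (k : ℕ) (w : ℕ → Node n) (u v : Node n), IsPath E k w u v ∧
    {x | ∃ t ≤ k, w t = x} = CoreNodes n E

/-- A compliant pair `(A, b) ∈ 𝕍(G)`: bounded continuous, with the sparsity
pattern dictated by the edge set `E`. -/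
def Compliant {n : ℕ} {S : Type*} [TopologicalSpace S] (E : Set (Node n × Node n))
    (A : S → Fin n → Fin n → ℝ) (b : S → Fin n → ℝ) : Prop :=
  Continuous A ∧ Continuous b ∧
  (∃ C, ∀ σ i j, |A σ i j| ≤ C) ∧ (∃ C, ∀ σ i, |b σ i| ≤ C) ∧
  (∀ σ (i j : Fin n), ((some j : Node n), (some i : Node n)) ∉ E → A σ i j = 0) ∧
  (∀ σ (i : Fin n), ((none : Node n), (some i : Node n)) ∉ E → b σ i = 0)

/-- The averaged-controllability rank criterion: the span of the Bochner integrals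
`∫ A(σ)^k b(σ) dμ`, `k ∈ ℕ`, is all of `ℝⁿ`. -/
def RankCriterion {n : ℕ} {S : Type*} [MeasurableSpace S]
    (μ : Measure S) (A : S → Fin n → Fin n → ℝ) (b : S → Fin n → ℝ) : Prop :=
  Submodule.span ℝ {x : Fin n → ℝ |
    ∃ k : ℕ, x = ∫ σ, (Matrix.of (A σ) ^ k).mulVec (b σ) ∂μ} = ⊤

/-- `S` is a topological manifold of dimension `d`. -/
def IsTopManifold (d : ℕ) (S : Type*) [TopologicalSpace S] : Prop :=
  ∀ x : S, ∃ U : Set S, IsOpen U ∧ x ∈ U ∧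
    ∃ W : Set (EuclideanSpace ℝ (Fin d)), IsOpen W ∧ Nonempty (↥U ≃ₜ ↥W)

/-- The support of `μ` contains a nonempty open set. -/
def SupportHasOpen {S : Type*} [TopologicalSpace S] [MeasurableSpace S]
    (μ : Measure S) : Prop :=
  ∃ U : Set S, IsOpen U ∧ U.Nonempty ∧ ∀ W ⊆ U, IsOpen W → W.Nonempty → 0 < μ W


theorem walk_snoc {V : Type*} {E : Set (V × V)} {k : ℕ} {w : ℕ → V} {u v x : V}
    (h : IsWalk E k w u v) (hx : (v, x) ∈ E) : ∃ w', IsWalk E (k+1) w' u x := by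
  obtain ⟨h0, h1, h2⟩ := h
  refine ⟨fun t => if t ≤ k then w t else x, ?_, ?_, ?_⟩
  · simpa using h0
  · simp
  · intro t ht
    rcases Nat.lt_or_ge t k with h | h
    · have a : t ≤ k := h.le
      have b : t + 1 ≤ k := h
      simpa [a, b] using h2 t h
    · have : t = k := by omega
      subst this
      simpa [h1] using hx

theorem cyc_step {V : Type*} {E : Set (V × V)} {u v : V} (hu : u ∈ CycSucc E)
    (h : (u, v) ∈ E) : v ∈ CycSucc E := by
  obtain ⟨c, hc, k, w, hw⟩ := hu
  obtain ⟨w', hw'⟩ := walk_snoc hw h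
  exact ⟨c, hc, k+1, w', hw'⟩

theorem cyc_seq {V : Type*} {E : Set (V × V)} {k : ℕ} {w : ℕ → V}
    (hw : ∀ t < k, (w t, w (t+1)) ∈ E) (s t : ℕ) (hst : s ≤ t) (ht : t ≤ k)
    (hs : w s ∈ CycSucc E) : w t ∈ CycSucc E := by
  induction t, hst using Nat.le_induction with
  | base => exact hs
  | succ t _ ih => exact cyc_step (ih (by omega)) (hw t (by omega))

theorem closed_walk_cyc {V : Type*} {E : Set (V × V)} (k : ℕ) : ∀ (w : ℕ → V) (u : V),
    1 ≤ k → IsWalk E k w u u → u ∈ CycSucc E := by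
  induction k using Nat.strong_induction_on with
  | _ k ih =>
    intro w u hk hw
    by_cases hinj : ∀ s < k, ∀ t < k, w s = w t → s = t
    · exact ⟨u, ⟨k, w, hk, hw, hinj⟩, 0, fun _ => u, rfl, rfl, by simp⟩
    · have key : ∃ s t, s < t ∧ t < k ∧ w s = w t := by
        push Not at hinj
        obtain ⟨s, hs, t, ht, he, hne⟩ := hinj
        rcases lt_or_gt_of_ne hne with h | h
        · exact ⟨s, t, h, ht, he⟩
        · exact ⟨t, s, h, hs, he.symm⟩
      obtain ⟨s, t, hst, ht, he⟩ := key
      have hc : w s ∈ CycSucc E := by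
        refine ih (t - s) (by omega) (fun r => w (s + r)) (w s) (by omega) ⟨rfl, ?_, ?_⟩
        · show w (s + (t - s)) = w s
          rw [Nat.add_sub_cancel' hst.le, he]
        · intro r hr
          exact hw.2.2 (s + r) (by omega)
      have := cyc_seq hw.2.2 s k (by omega) le_rfl hc
      rwa [hw.2.1] at this

theorem walk_of_ne {n : ℕ} {E : Set (Node n × Node n)} (M : Fin n → Fin n → ℝ) (c : Fin n → ℝ)
    (hM : ∀ (i j : Fin n), ((some j : Node n), (some i : Node n)) ∉ E → M i j = 0)
    (hc : ∀ (i : Fin n), ((none : Node n), (some i : Node n)) ∉ E → c i = 0) (k : ℕ) :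
    ∀ i, ((Matrix.of M) ^ k).mulVec c i ≠ 0 → ∃ w, IsWalk E (k+1) w none (some i) := by
  induction k with
  | zero =>
    intro i hi
    have h : ((none : Node n), (some i : Node n)) ∈ E := by
      by_contra h
      exact hi (by simpa using hc i h)
    exact walk_snoc (k := 0) (w := fun _ => none) ⟨rfl, rfl, by simp⟩ h
  | succ k ih =>
    intro i hi
    rw [pow_succ', ← Matrix.mulVec_mulVec] at hi
    simp only [Matrix.mulVec, dotProduct] at hi
    obtain ⟨j, -, hj⟩ := Finset.exists_ne_zero_of_sum_ne_zero hi
    obtain ⟨w, hw⟩ := ih j (right_ne_zero_of_mul hj)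
    refine walk_snoc hw ?_
    by_contra h
    exact left_ne_zero_of_mul hj (hM i j h)

/-- necessity: if the core of `G` has no directed spanning path, then
no compliant pair satisfies the averaged-controllability rank criterion — the span of
the moments is a proper subspace of `ℝⁿ`. -/
theorem stmt5 {n : ℕ} (hn : 1 ≤ n) (E : Set (Node n × Node n)) (hG : MemG n E)
    (hnospan : ¬ HasCoreSpanningPath n E)
    (S : Type*) [TopologicalSpace S] [MeasurableSpace S] [BorelSpace S]
    (μ : Measure S) [IsProbabilityMeasure μ]
    (A : S → Fin n → Fin n → ℝ) (b : S → Fin n → ℝ) (hAb : Compliant E A b) :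
    Submodule.span ℝ {x : Fin n → ℝ |
        ∃ k : ℕ, x = ∫ σ, (Matrix.of (A σ) ^ k).mulVec (b σ) ∂μ} ≠ ⊤ := by
  classical
  intro htop
  obtain ⟨-, -, -, -, hA, hb⟩ := hAb
  have hnone : (none : Node n) ∉ CycSucc E := by
    rintro ⟨u, ⟨k, w, hk, hw, -⟩, l, w', hw'⟩
    have hu : u = none := by
      rcases Nat.eq_zero_or_pos l with h | h
      · subst h
        exact hw'.1.symm.trans hw'.2.1
      · refine absurd ?_ (hG.1 _ (hw'.2.2 (l-1) (by omega)))
        simpa [Nat.sub_add_cancel h] using hw'.2.1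
    refine hG.1 _ (hw.2.2 (k-1) (by omega)) ?_
    simpa [Nat.sub_add_cancel hk, hu] using hw.2.1
  set K : Finset (Fin n) := Finset.univ.filter (fun i => (some i : Node n) ∉ CycSucc E) with hK
  -- a core walk of length `K.card` from `β`
  by_cases hwalk : ∃ w v, IsWalk E K.card w none v ∧ v ∉ CycSucc E
  · obtain ⟨w, v, hw, hv⟩ := hwalk
    have hcore : ∀ t ≤ K.card, w t ∉ CycSucc E := by
      intro t ht h
      have := cyc_seq hw.2.2 t K.card ht le_rfl h
      rw [hw.2.1] at this
      exact hv this
    have hlt : ∀ s t, s < t → t ≤ K.card → w s ≠ w t := by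
      intro s t hst ht he
      refine hcore s (by omega) (closed_walk_cyc (t - s) (fun r => w (s + r)) (w s) (by omega)
        ⟨rfl, ?_, ?_⟩)
      · show w (s + (t - s)) = w s
        rw [Nat.add_sub_cancel' hst.le, he]
      · intro r hr
        exact hw.2.2 (s + r) (by omega)
    have hinj : ∀ s ≤ K.card, ∀ t ≤ K.card, w s = w t → s = t := by
      intro s hs t ht he
      rcases lt_trichotomy s t with h | h | h
      · exact absurd he (hlt s t h ht)
      · exact h
      · exact absurd he.symm (hlt t s h hs)
    have hmem : ∀ x : Node n, x ∈ Finset.insertNone K ↔ x ∉ CycSucc E := by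
      intro x
      cases x with
      | none => simpa using hnone
      | some i => simp [hK]
    have himg : (Finset.range (K.card + 1)).image w = Finset.insertNone K := by
      apply Finset.eq_of_subset_of_card_le
      · intro x hx
        obtain ⟨t, ht, rfl⟩ := Finset.mem_image.1 hx
        rw [hmem]
        exact hcore t (by simpa [Nat.lt_succ_iff] using ht)
      · rw [Finset.card_insertNone, Finset.card_image_of_injOn]
        · simp
        · intro s hs t ht he
          simp only [Finset.coe_range, Set.mem_Iio] at hs ht
          exact hinj s (by omega) t (by omega) he
    apply hnospan
    refine ⟨K.card, w, none, v, ⟨hw, hinj⟩, ?_⟩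
    ext x
    have h1 : x ∈ CoreNodes n E ↔ x ∈ Finset.insertNone K := by
      rw [hmem]
      simp [CoreNodes, CoreOn]
    rw [h1, ← himg]
    simp [Nat.lt_succ_iff]
  · have hpos : 1 ≤ K.card := by
      by_contra h
      have h0 : K.card = 0 := by omega
      exact hwalk ⟨fun _ => none, none, ⟨rfl, rfl, by simp [h0]⟩, hnone⟩
    have hzero : ∀ k, K.card ≤ k + 1 → ∀ i ∈ K, ∀ σ,
        (Matrix.of (A σ) ^ k).mulVec (b σ) i = 0 := by
      intro k hk i hi σ
      by_contra hne
      obtain ⟨w, hw⟩ := walk_of_ne (A σ) (b σ) (hA σ) (hb σ) k i hne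
      refine hwalk ⟨w, w K.card, ⟨hw.1, rfl, fun t ht => hw.2.2 t (by omega)⟩, fun h => ?_⟩
      have := cyc_seq hw.2.2 K.card (k+1) hk le_rfl h
      rw [hw.2.1] at this
      exact (Finset.mem_filter.1 hi).2 this
    have hint : ∀ k, K.card ≤ k + 1 → ∀ i ∈ K,
        (∫ σ, (Matrix.of (A σ) ^ k).mulVec (b σ) ∂μ) i = 0 := by
      intro k hk i hi
      by_cases hI : Integrable (fun σ => (Matrix.of (A σ) ^ k).mulVec (b σ)) μ
      · have := (ContinuousLinearMap.proj (R := ℝ) (φ := fun _ : Fin n => ℝ) i).integral_comp_comm hI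
        simp only [ContinuousLinearMap.proj_apply] at this
        rw [← this]
        simp [hzero k hk i hi]
      · rw [integral_undef hI]
        rfl
    let L : (Fin n → ℝ) →ₗ[ℝ] (K → ℝ) := LinearMap.funLeft ℝ ℝ (Subtype.val : K → Fin n)
    have hL : Function.Surjective L :=
      LinearMap.funLeft_surjective_of_injective ℝ ℝ _ Subtype.val_injective
    let f : Fin (K.card - 1) → (K → ℝ) := fun k =>
      L (∫ σ, (Matrix.of (A σ) ^ (k : ℕ)).mulVec (b σ) ∂μ)
    have hspan : Submodule.span ℝ (Set.range f) = ⊤ := by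
      rw [eq_top_iff, ← LinearMap.range_eq_top.2 hL, LinearMap.range_eq_map, ← htop,
        Submodule.map_span, Submodule.span_le]
      rintro _ ⟨_, ⟨k, rfl⟩, rfl⟩
      by_cases hk : k < K.card - 1
      · exact Submodule.subset_span ⟨⟨k, hk⟩, rfl⟩
      · have : L (∫ σ, (Matrix.of (A σ) ^ k).mulVec (b σ) ∂μ) = 0 := by
          ext i
          exact hint k (by omega) i i.2
        rw [this]
        exact Submodule.zero_mem _
    have h1 := finrank_range_le_card (R := ℝ) f
    rw [Set.finrank, hspan, finrank_top] at h1
    simp at h1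
    omega
end

section
/- Let n ≥ 1 and let G ∈ 𝒢_{n,1} be reduced. Then for every node v of G there exists exactly one path in G from β to v. -/
open MeasureTheory

/-- There is exactly one path from `u` to `v`. -/
def UniquePathFrom {V : Type*} (E : Set (V × V)) (u v : V) : Prop :=
  (∃ k w, IsPath E k w u v) ∧
  ∀ (k : ℕ) (w : ℕ → V) (k' : ℕ) (w' : ℕ → V),
    IsPath E k w u v → IsPath E k' w' u v → k = k' ∧ ∀ t ≤ k, w t = w' t

/-- A directed tree on the node set `N`: there is a unique root, from which every node
is reachable by a unique path. -/
def IsDirectedTree {W : Type*} (N : Set W) (F : Set (W × W)) : Prop :=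
  ∃ r ∈ N, (∀ v ∈ N, UniquePathFrom F r v) ∧
    (∀ r' ∈ N, (∀ v ∈ N, Reachable F r' v) → r' = r)

/-- The strong component of `u`: nodes mutually reachable with `u`. -/
def StrongComp {V : Type*} (E : Set (V × V)) (u : V) : Set V :=
  {v | Reachable E u v ∧ Reachable E v u}

/-- The nodes of the skeleton graph (condensation): the strong components. -/
def SkelNodes {V : Type*} (E : Set (V × V)) : Set (Set V) :=
  {C | ∃ u, C = StrongComp E u}

/-- The edges of the skeleton graph: `(C, C')` is an edge whenever some edge of `E`
goes from a node of `C` to a node of `C'`. -/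
def SkelEdges {V : Type*} (E : Set (V × V)) : Set (Set V × Set V) :=
  {p | p.1 ∈ SkelNodes E ∧ p.2 ∈ SkelNodes E ∧ ∃ u ∈ p.1, ∃ v ∈ p.2, (u, v) ∈ E}

/-- The induced subgraph on `N` (w.r.t. the ambient edge set `F`) is a directed path:
its nodes can be ordered `w 0, …, w r` so that its edges are exactly the consecutive
pairs. -/
def IsPathGraphOn {W : Type*} (N : Set W) (F : Set (W × W)) : Prop :=
  ∃ (r : ℕ) (w : ℕ → W), (∀ s ≤ r, ∀ t ≤ r, w s = w t → s = t) ∧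
    {x | ∃ t ≤ r, w t = x} = N ∧
    (∀ p : W × W, (p ∈ F ∧ p.1 ∈ N ∧ p.2 ∈ N) ↔ ∃ t < r, p = (w t, w (t + 1)))

/-- The induced subgraph on `C` is a single directed cycle: its nodes can be cyclically
ordered so that its edges are exactly the consecutive pairs. -/
def IsSingleCycleOn {V : Type*} (C : Set V) (E : Set (V × V)) : Prop :=
  ∃ (l : ℕ) (w : ℕ → V), 1 ≤ l ∧ (∀ s < l, ∀ t < l, w s = w t → s = t) ∧
    {x | ∃ t < l, w t = x} = C ∧
    (∀ p : V × V, (p ∈ E ∧ p.1 ∈ C ∧ p.2 ∈ C) ↔ ∃ t < l, p = (w t, w ((t + 1) % l)))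

/-- `G ∈ 𝒢_{n,1}` is reduced (Definition 5 of the paper): (1) the skeleton graph `S`
with self-loops removed is a directed tree and the core `S*` of `S` is a directed path;
(2) every edge of `S` between distinct components comes from a unique edge of `G`;
(3) every node of `S` with a self-loop is an out-neighbor of `S*`, and every nontrivial
strong component of `G` is a single directed cycle. -/
def ReducedGraph (n : ℕ) (E : Set (Node n × Node n)) : Prop :=
  MemG n E ∧
  IsDirectedTree (SkelNodes E) {p ∈ SkelEdges E | p.1 ≠ p.2} ∧
  IsPathGraphOn (CoreOn (SkelNodes E) (SkelEdges E)) (SkelEdges E) ∧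
  (∀ p ∈ SkelEdges E, p.1 ≠ p.2 →
    ∃! e : Node n × Node n, e ∈ E ∧ e.1 ∈ p.1 ∧ e.2 ∈ p.2) ∧
  (∀ C : Set (Node n), (C, C) ∈ SkelEdges E →
    (∃ C' ∈ CoreOn (SkelNodes E) (SkelEdges E), (C', C) ∈ SkelEdges E) ∧
    IsSingleCycleOn C E)

theorem aux_reach {V : Type*} {E : Set (V × V)} {u v : V} :
    Reachable E u v ↔ Relation.ReflTransGen (fun a b => (a, b) ∈ E) u v := by
  constructor
  · rintro ⟨k, w, h0, hk, h⟩
    subst h0 hk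
    have : ∀ t ≤ k, Relation.ReflTransGen (fun a b => (a, b) ∈ E) (w 0) (w t) := by
      intro t
      induction t with
      | zero => intro _; exact .refl
      | succ t ih => intro ht; exact (ih (by omega)).tail (h t (by omega))
    exact this k le_rfl
  · intro h
    induction h with
    | refl => exact ⟨0, fun _ => u, rfl, rfl, by simp⟩
    | @tail b c _ hbc ih =>
      obtain ⟨k, w, h0, hk, h⟩ := ih
      refine ⟨k + 1, fun t => if t ≤ k then w t else c, by simp [h0], by simp, ?_⟩
      intro t ht
      rcases Nat.lt_or_ge t k with h1 | h1
      · have h2 : t ≤ k := by omega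
        have h3 : t + 1 ≤ k := by omega
        simpa [h2, h3] using h t h1
      · obtain rfl : t = k := by omega
        simpa [hk] using hbc

theorem aux_trunc {V : Type*} {E : Set (V × V)} {u v : V} {k : ℕ} {w : ℕ → V}
    (h : IsPath E k w u v) {t : ℕ} (ht : t ≤ k) : IsPath E t w u (w t) :=
  ⟨⟨h.1.1, rfl, fun s hs => h.1.2.2 s (by omega)⟩,
    fun s hs s' hs' => h.2 s (by omega) s' (by omega)⟩

theorem aux_ext {V : Type*} {E : Set (V × V)} {u v x : V} {k : ℕ} {w : ℕ → V}
    (h : IsPath E k w u v) (hx : (v, x) ∈ E) (hn : ∀ t ≤ k, w t ≠ x) :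
    IsPath E (k + 1) (fun t => if t ≤ k then w t else x) u x := by
  obtain ⟨⟨h0, hk, h⟩, hinj⟩ := h
  refine ⟨⟨by simp [h0], by simp, ?_⟩, ?_⟩
  · intro t ht
    rcases Nat.lt_or_ge t k with h1 | h1
    · have h2 : t ≤ k := by omega
      have h3 : t + 1 ≤ k := by omega
      simpa [h2, h3] using h t h1
    · obtain rfl : t = k := by omega
      simpa [hk] using hx
  · intro s hs t ht hst
    by_cases h1 : s ≤ k <;> by_cases h2 : t ≤ k
    · simp only [h1, h2, if_true] at hst
      exact hinj s h1 t h2 hst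
    · simp only [h1, h2, if_true, if_false] at hst
      exact absurd hst (hn s h1)
    · simp only [h1, h2, if_true, if_false] at hst
      exact absurd hst.symm (hn t h2)
    · omega

theorem aux_path {V : Type*} {E : Set (V × V)} {u v : V}
    (h : Relation.ReflTransGen (fun a b => (a, b) ∈ E) u v) : ∃ k w, IsPath E k w u v := by
  induction h with
  | refl => exact ⟨0, fun _ => u, ⟨rfl, rfl, by simp⟩, by intros; omega⟩
  | @tail b c _ hbc ih =>
    obtain ⟨k, w, h⟩ := ih
    by_cases hn : ∀ t ≤ k, w t ≠ c
    · exact ⟨_, _, aux_ext h hbc hn⟩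
    · push Not at hn
      obtain ⟨t, ht, rfl⟩ := hn
      exact ⟨t, w, aux_trunc h ht⟩

theorem aux_comp_self {V : Type*} (E : Set (V × V)) (u : V) : u ∈ StrongComp E u :=
  ⟨aux_reach.2 .refl, aux_reach.2 .refl⟩

theorem aux_comp_eq {V : Type*} {E : Set (V × V)} {u v : V} (h : v ∈ StrongComp E u) :
    StrongComp E v = StrongComp E u := by
  obtain ⟨h1, h2⟩ := h
  rw [aux_reach] at h1 h2
  ext x
  simp only [StrongComp, Set.mem_setOf_eq, aux_reach]
  exact ⟨fun h => ⟨h1.trans h.1, h.2.trans h2⟩, fun h => ⟨h2.trans h.1, h.2.trans h1⟩⟩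

theorem aux_in_comp {V : Type*} {E : Set (V × V)} {C : Set V} (hC : C ∈ SkelNodes E) {x y : V}
    (hx : x ∈ C) (hy : y ∈ C) : Relation.ReflTransGen (fun a b => (a, b) ∈ E) x y := by
  obtain ⟨u, rfl⟩ := hC
  exact (aux_reach.1 hx.2).trans (aux_reach.1 hy.1)

theorem aux_skel_reach {V : Type*} {E : Set (V × V)} {C D : Set V} (hC : C ∈ SkelNodes E)
    (h : Reachable {p ∈ SkelEdges E | p.1 ≠ p.2} C D) {x y : V} (hx : x ∈ C) (hy : y ∈ D) :
    Relation.ReflTransGen (fun a b => (a, b) ∈ E) x y := by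
  rw [aux_reach] at h
  induction h generalizing y with
  | refl => exact aux_in_comp hC hx hy
  | tail _ hbc ih =>
    obtain ⟨⟨_, h2, a, ha, b, hb, hab⟩, _⟩ := hbc
    exact ((ih ha).tail hab).trans (aux_in_comp h2 hb hy)

/-- in a reduced graph `G ∈ 𝒢_{n,1}` there is exactly one path from `β`
to every node. -/
theorem stmt8 {n : ℕ} (hn : 1 ≤ n) (E : Set (Node n × Node n))
    (hred : ReducedGraph n E) :
    ∀ v : Node n, UniquePathFrom E (none : Node n) v := by
  obtain ⟨⟨hβ, -⟩, ⟨r, hr, htree, -⟩, -, huniq, hcyc⟩ := hred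
  -- the root
  have hβr : ∀ x, Relation.ReflTransGen (fun a b => (a, b) ∈ E) x none → x = none := by
    intro x hx
    rcases hx.cases_tail with h | ⟨c, _, h⟩
    · exact h.symm
    · exact absurd rfl (hβ _ h)
  have hreach : ∀ v, Relation.ReflTransGen (fun a b => (a, b) ∈ E) none v := by
    have key : ∀ x ∈ r, ∀ v, Relation.ReflTransGen (fun a b => (a, b) ∈ E) x v := by
      intro x hx v
      obtain ⟨⟨k, w, hw⟩, -⟩ := htree (StrongComp E v) ⟨v, rfl⟩
      exact aux_skel_reach hr ⟨k, w, hw.1⟩ hx (aux_comp_self E v)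
    obtain ⟨u, rfl⟩ := hr
    have := key u (aux_comp_self E u)
    have hu := hβr u (this none)
    rwa [hu] at this
  -- uniqueness of the edge entering a component
  have hext : ∀ C ∈ SkelNodes E, ∀ u x u' x', (u, x) ∈ E → (u', x') ∈ E → x ∈ C → x' ∈ C →
      u ∉ C → u' ∉ C → u = u' ∧ x = x' := by
    intro C hC u x u' x' he he' hx hx' hu hu'
    have aux : ∀ u x, (u, x) ∈ E → x ∈ C → u ∉ C →
        (StrongComp E u, C) ∈ {p ∈ SkelEdges E | p.1 ≠ p.2} ∧ ∃ k w,
        IsPath {p ∈ SkelEdges E | p.1 ≠ p.2} (k + 1) w r C ∧ w k = StrongComp E u := by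
      intro u x he hx hu
      have hF : (StrongComp E u, C) ∈ {p ∈ SkelEdges E | p.1 ≠ p.2} := by
        refine ⟨⟨⟨u, rfl⟩, hC, u, aux_comp_self E u, x, hx, he⟩, ?_⟩
        rintro h
        have h' : StrongComp E u = C := h
        exact hu (h' ▸ aux_comp_self E u)
      refine ⟨hF, ?_⟩
      obtain ⟨⟨k, w, hw⟩, -⟩ := htree (StrongComp E u) ⟨u, rfl⟩
      refine ⟨k, _, aux_ext hw hF ?_, by simpa using hw.1.2.1⟩
      intro t ht hwt
      apply hu
      have hR : Reachable {p ∈ SkelEdges E | p.1 ≠ p.2} C (StrongComp E u) := by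
        refine ⟨k - t, fun s => w (t + s), by simpa using hwt, ?_, ?_⟩
        · simpa [Nat.add_sub_cancel' ht] using hw.1.2.1
        · intro s hs
          exact hw.1.2.2 (t + s) (by omega)
      have h1 := aux_skel_reach hC hR hx (aux_comp_self E u)
      obtain ⟨c, rfl⟩ := hC
      have h2 := aux_comp_eq hx
      rw [← h2]
      exact ⟨aux_reach.2 h1, aux_reach.2 (.single he)⟩
    obtain ⟨hF, k, w, hw, hk⟩ := aux u x he hx hu
    obtain ⟨hF', k', w', hw', hk'⟩ := aux u' x' he' hx' hu'
    obtain ⟨h1, h2⟩ := (htree C hC).2 _ _ _ _ hw hw'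
    obtain rfl : k = k' := by omega
    have hcc : StrongComp E u = StrongComp E u' := by rw [← hk, ← hk', h2 k (by omega)]
    obtain ⟨e, -, he0⟩ := huniq _ hF.1 hF.2
    have e1 := he0 (u, x) ⟨he, aux_comp_self E u, hx⟩
    have e2 := he0 (u', x') ⟨he', hcc ▸ aux_comp_self E u', hx'⟩
    exact Prod.mk.inj (e1.trans e2.symm)
  -- internal predecessors
  have hint : ∀ C ∈ SkelNodes E, ∀ u u' x, (u, x) ∈ E → (u', x) ∈ E → x ∈ C →
      u ∈ C → u' ∈ C → u = u' := by
    intro C hC u u' x he he' hx hu hu'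
    obtain ⟨-, l, w, hl, hinj, hset, hedge⟩ := hcyc C ⟨hC, hC, u, hu, x, hx, he⟩
    obtain ⟨t, ht, h1⟩ := (hedge (u, x)).1 ⟨he, hu, hx⟩
    obtain ⟨s, hs, h2⟩ := (hedge (u', x)).1 ⟨he', hu', hx⟩
    obtain ⟨h1, h1'⟩ := Prod.mk.inj h1
    obtain ⟨h2, h2'⟩ := Prod.mk.inj h2
    have h3 := hinj _ (Nat.mod_lt _ (by omega)) _ (Nat.mod_lt _ (by omega)) (h1'.symm.trans h2')
    have h4 : t = s := by
      have h5 : t ≡ s [MOD l] := Nat.ModEq.add_right_cancel' 1 h3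
      have h6 : t % l = s % l := h5
      rwa [Nat.mod_eq_of_lt ht, Nat.mod_eq_of_lt hs] at h6
    rw [h1, h2, h4]
  -- a path into a component whose last edge is internal enters it before
  have hmix : ∀ C ∈ SkelNodes E, ∀ k w x u, IsPath E (k + 1) w none x → x ∈ C → w k ∈ C →
      (u, x) ∈ E → u ∉ C → False := by
    intro C hC k w x u hw hx hwk he hu
    have hnC : (none : Node n) ∉ C := by
      intro h
      have := hβr _ (aux_in_comp hC hx h)
      exact hβ _ he this
    have : ∀ t ≤ k, w t ∉ C := by
      intro t
      induction t with
      | zero => intro _; rw [hw.1.1]; exact hnC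
      | succ t ih =>
        intro ht hin
        have h1 := ih (by omega)
        have h2 := (hext C hC _ _ _ _ (hw.1.2.2 t (by omega)) he hin hx h1 hu).2
        have := hw.2 (t + 1) (by omega) (k + 1) le_rfl (h2.trans hw.1.2.1.symm)
        omega
    exact this k le_rfl hwk
  intro v
  refine ⟨aux_path (hreach v), ?_⟩
  intro k
  induction k generalizing v with
  | zero =>
    intro w k' w' hw hw'
    have hv : v = none := hw.1.2.1.symm.trans hw.1.1
    subst hv
    have : 0 = k' := hw'.2 0 (by omega) k' le_rfl (hw'.1.1.trans hw'.1.2.1.symm)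
    refine ⟨this, fun t ht => ?_⟩
    obtain rfl : t = 0 := by omega
    rw [hw.1.1, hw'.1.1]
  | succ k ih =>
    intro w k' w' hw hw'
    have he := hw.1.2.2 k (by omega)
    rw [hw.1.2.1] at he
    rcases k' with _ | k'
    · exact absurd (hw'.1.2.1.symm.trans hw'.1.1) (hβ _ he)
    have he' := hw'.1.2.2 k' (by omega)
    rw [hw'.1.2.1] at he'
    have hC : StrongComp E v ∈ SkelNodes E := ⟨v, rfl⟩
    have hv := aux_comp_self E v
    have hpred : w k = w' k' := by
      by_cases h1 : w k ∈ StrongComp E v <;> by_cases h2 : w' k' ∈ StrongComp E v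
      · exact hint _ hC _ _ _ he he' hv h1 h2
      · exact (hmix _ hC _ _ _ _ hw hv h1 he' h2).elim
      · exact (hmix _ hC _ _ _ _ hw' hv h2 he h1).elim
      · exact (hext _ hC _ _ _ _ he he' hv hv h1 h2).1
    obtain ⟨h1, h2⟩ := ih (w k) w k' w' (aux_trunc hw (by omega))
      (hpred ▸ aux_trunc hw' (by omega))
    refine ⟨by omega, fun t ht => ?_⟩
    rcases Nat.lt_or_ge k t with h | h
    · obtain rfl : t = k + 1 := by omega
      rw [hw.1.2.1, h1, hw'.1.2.1]
    · exact h2 t h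
end

section
/- Let n ≥ 1 and let G ∈ 𝒢_{n,1} be reduced. For every nontrivial strong component G_p (a directed cycle of length ℓ_p) and every integer j ≥ 1: V_p⁺(j) = { α_i ∈ V_p⁺ : dep(α_i) ≤ j and ℓ_p divides j − dep(α_i) }; moreover, for every α_i ∈ V_p⁺(j) there is exactly one walk of length j in G from β to α_i. -/
open MeasureTheory

/-- `V(j)`: nodes reachable from `β` by a walk of length `j`. -/
def VSet {n : ℕ} (E : Set (Node n × Node n)) (j : ℕ) : Set (Node n) :=
  {v | ∃ w : ℕ → Node n, IsWalk E j w (none : Node n) v}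

/-- `V_p⁺`: nodes reachable by a walk from some node of the component `C`. -/
def VpPlus {n : ℕ} (E : Set (Node n × Node n)) (C : Set (Node n)) : Set (Node n) :=
  {v | ∃ u ∈ C, Reachable E u v}

section Helpers

variable {V : Type*} {E : Set (V × V)}

theorem walk_suffix {k : ℕ} {w : ℕ → V} {u v : V} (h : IsWalk E k w u v) {a : ℕ} (ha : a ≤ k) :
    IsWalk E (k - a) (fun t => w (a + t)) (w a) v := by
  obtain ⟨h0, hk, hs⟩ := h
  refine ⟨rfl, ?_, fun t ht => hs (a + t) (by omega)⟩
  show w (a + (k - a)) = v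
  rw [← hk]; congr 1; omega

theorem walk_prefix {k : ℕ} {w : ℕ → V} {u v : V} (h : IsWalk E k w u v) {a : ℕ} (ha : a ≤ k) :
    IsWalk E a w u (w a) :=
  ⟨h.1, rfl, fun t ht => h.2.2 t (by omega)⟩

theorem walk_append {k m : ℕ} {w w' : ℕ → V} {u v x : V} (h : IsWalk E k w u v)
    (h' : IsWalk E m w' v x) :
    IsWalk E (k + m) (fun t => if t ≤ k then w t else w' (t - k)) u x := by
  obtain ⟨h0, hk, hs⟩ := h
  obtain ⟨h0', hk', hs'⟩ := h'
  refine ⟨by simpa using h0, ?_, ?_⟩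
  · by_cases hm : m = 0
    · subst hm; simp [hk, ← h0', hk']
    · have : ¬ (k + m ≤ k) := by omega
      simp [hm, hk']
  · intro t ht
    by_cases h1 : t + 1 ≤ k
    · have h2 : t ≤ k := by omega
      simp only [h1, h2, if_true]; exact hs t (by omega)
    · by_cases h2 : t ≤ k
      · have h3 : t = k := by omega
        subst h3
        simp only [h1, h2, if_true, if_false, hk, ← h0']
        have := hs' 0 (by omega)
        simpa using this
      · simp only [h1, h2, if_false]
        have := hs' (t - k) (by omega)
        rwa [show t - k + 1 = t + 1 - k by omega] at this

theorem reach_refl (u : V) : Reachable E u u := ⟨0, fun _ => u, rfl, rfl, by omega⟩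

theorem reach_trans {a b c : V} (h : Reachable E a b) (h' : Reachable E b c) :
    Reachable E a c := by
  obtain ⟨k, w, hw⟩ := h
  obtain ⟨m, w', hw'⟩ := h'
  exact ⟨_, _, walk_append hw hw'⟩

theorem reach_edge {a b : V} (h : (a, b) ∈ E) : Reachable E a b :=
  ⟨1, fun t => if t = 0 then a else b, by simp, by simp, by
    intro t ht
    have : t = 0 := by omega
    subst this; simpa using h⟩

theorem walk_reach {k : ℕ} {w : ℕ → V} {u v : V} (h : IsWalk E k w u v) {a b : ℕ}
    (hab : a ≤ b) (hb : b ≤ k) : Reachable E (w a) (w b) :=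
  ⟨_, _, walk_suffix (walk_prefix h hb) hab⟩

theorem walk_cross {k : ℕ} {w : ℕ → V} {u v : V} (h : IsWalk E k w u v) (S : Set V)
    (hu : u ∉ S) (hv : v ∈ S) : ∃ t < k, w t ∉ S ∧ w (t + 1) ∈ S := by
  by_contra hcon
  push Not at hcon
  have : ∀ t ≤ k, w t ∉ S := by
    intro t
    induction t with
    | zero => intro _; rw [h.1]; exact hu
    | succ t ih => intro ht; exact hcon t (by omega) (ih (by omega))
  exact this k le_rfl (by rw [h.2.1]; exact hv)

theorem comp_self (u : V) : u ∈ StrongComp E u := ⟨reach_refl u, reach_refl u⟩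

theorem comp_eq {u v : V} (h : v ∈ StrongComp E u) : StrongComp E v = StrongComp E u := by
  ext x
  exact ⟨fun hx => ⟨reach_trans h.1 hx.1, reach_trans hx.2 h.2⟩,
    fun hx => ⟨reach_trans h.2 hx.1, reach_trans hx.2 h.1⟩⟩

theorem comp_eq' {u v : V} (h : StrongComp E v = StrongComp E u) : v ∈ StrongComp E u :=
  h ▸ comp_self v

theorem skel_eq {D : Set V} (hD : D ∈ SkelNodes E) {x : V} (hx : x ∈ D) : D = StrongComp E x := by
  obtain ⟨u, rfl⟩ := hD
  exact (comp_eq hx).symm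

theorem skel_edge {a b : V} (h : (a, b) ∈ E) : (StrongComp E a, StrongComp E b) ∈ SkelEdges E :=
  ⟨⟨a, rfl⟩, ⟨b, rfl⟩, a, comp_self a, b, comp_self b, h⟩

theorem skel_reach {a b : V} (h : Reachable E a b) :
    Reachable (SkelEdges E) (StrongComp E a) (StrongComp E b) := by
  obtain ⟨k, w, h0, hk, hs⟩ := h
  exact ⟨k, fun t => StrongComp E (w t), by simp [h0], by simp [hk],
    fun t ht => skel_edge (hs t ht)⟩

theorem skel_reach_rev {F : Set (Set V × Set V)} (hF : F ⊆ SkelEdges E) {D : Set V} {b : V}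
    (h : Reachable F D (StrongComp E b)) {a : V} (ha : a ∈ D) : Reachable E a b := by
  obtain ⟨k, w, h0, hk, hs⟩ := h
  have key : ∀ t ≤ k, ∀ x ∈ w t, Reachable E a x ∨ t = 0 := by
    intro t
    induction t with
    | zero => intro _ x _; exact Or.inr rfl
    | succ t ih =>
      intro ht x hx
      left
      obtain ⟨h1, h2, p, hp, q, hq, hpq⟩ := hF (hs t (by omega))
      have hqx : Reachable E q x := by
        have := skel_eq h2 hq
        simp only at this
        rw [this] at hx; exact hx.1
      have hap : Reachable E a p := by
        rcases ih (by omega) p hp with h | h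
        · exact h
        · subst h
          have := skel_eq h1 hp
          simp only [h0] at this
          rw [this] at ha; exact ha.2
      exact reach_trans hap (reach_trans (reach_edge hpq) hqx)
  rcases key k le_rfl b (by rw [hk]; exact comp_self b) with h | h
  · exact h
  · subst h
    rw [← h0, hk] at ha
    exact ha.2

/-- Uniqueness of the edge entering a component from outside. -/
theorem entry_unique
    (htree : IsDirectedTree (SkelNodes E) {p ∈ SkelEdges E | p.1 ≠ p.2})
    (hun : ∀ p ∈ SkelEdges E, p.1 ≠ p.2 → ∃! e : V × V, e ∈ E ∧ e.1 ∈ p.1 ∧ e.2 ∈ p.2)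
    {x y z z' : V} (h1 : (x, z) ∈ E) (h2 : (y, z') ∈ E) (hz : z' ∈ StrongComp E z)
    (hx : x ∉ StrongComp E z) (hy : y ∉ StrongComp E z) : x = y ∧ z = z' := by
  obtain ⟨r, hr, hpath, -⟩ := htree
  have ext : ∀ x z : V, (x, z) ∈ E → x ∉ StrongComp E z → ∃ k w,
      IsPath {p ∈ SkelEdges E | p.1 ≠ p.2} (k + 1) w r (StrongComp E z) ∧ w k = StrongComp E x := by
    intro x z h1 hx
    obtain ⟨⟨k, w, hw, hinj⟩, -⟩ := hpath (StrongComp E x) ⟨x, rfl⟩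
    have hnz : ∀ t ≤ k, w t ≠ StrongComp E z := by
      intro t ht heq
      have h3 : Reachable {p ∈ SkelEdges E | p.1 ≠ p.2} (w t) (w k) := walk_reach hw ht le_rfl
      rw [hw.2.1, heq] at h3
      exact hx ⟨skel_reach_rev (fun _ h => h.1) h3 (comp_self z), reach_edge h1⟩
    refine ⟨k, fun t => if t ≤ k then w t else StrongComp E z, ⟨⟨?_, ?_, ?_⟩, ?_⟩, ?_⟩
    · simpa using hw.1
    · simp
    · intro t ht
      by_cases h : t + 1 ≤ k
      · have h' : t ≤ k := by omega
        simp only [h, h', if_true]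
        exact hw.2.2 t (by omega)
      · have h' : t = k := by omega
        subst h'
        simp only [le_refl, if_true, h, if_false, hw.2.1]
        exact ⟨skel_edge h1, fun h => hx (comp_eq' h)⟩
    · intro s hs t ht hst
      by_cases h : s ≤ k <;> by_cases h' : t ≤ k <;> simp only [h, h', if_true, if_false] at hst
      · exact hinj s h t h' hst
      · exact absurd hst (hnz s h)
      · exact absurd hst.symm (hnz t h')
      · omega
    · simpa using hw.2.1
  have hzz : StrongComp E z' = StrongComp E z := comp_eq hz
  obtain ⟨k, w, hw, hwk⟩ := ext x z h1 hx
  obtain ⟨k', w', hw', hwk'⟩ := ext y z' h2 (by rwa [hzz])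
  rw [hzz] at hw'
  obtain ⟨hk, heq⟩ := (hpath _ ⟨z, rfl⟩).2 _ _ _ _ hw hw'
  have hkk : k = k' := by omega
  subst hkk
  have hxy : StrongComp E x = StrongComp E y := by rw [← hwk, ← hwk', heq k (by omega)]
  have := (hun (StrongComp E x, StrongComp E z) (skel_edge h1)
    (fun h => hx (comp_eq' h))).unique (y₁ := (x, z)) (y₂ := (y, z'))
    ⟨h1, comp_self x, comp_self z⟩ ⟨h2, comp_eq' hxy.symm, hz⟩
  exact ⟨congrArg Prod.fst this, congrArg Prod.snd this⟩

/-- Backwards uniqueness of walks inside a set with unique predecessors. -/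
theorem back_unique {U : Set V} (hU : ∀ x x' y, x ∈ U → x' ∈ U → (x, y) ∈ E → (x', y) ∈ E → x = x')
    {k k' : ℕ} {w w' : ℕ → V} {u u' v : V} (h : IsWalk E k w u v) (h' : IsWalk E k' w' u' v)
    (s : ℕ) (hs : s ≤ k) (hs' : s ≤ k') (hin : ∀ t, k - s ≤ t → t ≤ k → w t ∈ U)
    (hin' : ∀ t, k' - s ≤ t → t ≤ k' → w' t ∈ U) : w (k - s) = w' (k' - s) := by
  induction s with
  | zero => simp [h.2.1, h'.2.1]
  | succ s ih =>
    have := ih (by omega) (by omega) (fun t h1 h2 => hin t (by omega) h2)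
      (fun t h1 h2 => hin' t (by omega) h2)
    have e1 := h.2.2 (k - (s + 1)) (by omega)
    have e2 := h'.2.2 (k' - (s + 1)) (by omega)
    rw [show k - (s + 1) + 1 = k - s by omega] at e1
    rw [show k' - (s + 1) + 1 = k' - s by omega, ← this] at e2
    exact hU _ _ _ (hin _ le_rfl (by omega)) (hin' _ le_rfl (by omega)) e1 e2

theorem abstract_main {β x0 y0 : V} {U : Set V} {l : ℕ}
    (hclosed : ∀ x y, x ∈ U → (x, y) ∈ E → y ∈ U) (hβ : β ∉ U)
    (H1 : ∀ x y, x ∉ U → y ∈ U → (x, y) ∈ E → x = x0 ∧ y = y0)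
    (H2 : ∀ x x' y, x ∈ U → x' ∈ U → (x, y) ∈ E → (x', y) ∈ E → x = x')
    (H3 : ∀ k k' w w', IsWalk E k w β x0 → IsWalk E k' w' β x0 → k = k' ∧ ∀ t ≤ k, w t = w' t)
    (H4 : ∀ m w, IsWalk E m w y0 y0 → l ∣ m)
    (H5 : ∃ w, IsWalk E l w y0 y0)
    {v : V} (hv : v ∈ U) {d : ℕ} {p : ℕ → V} (hp : IsPath E d p β v) (j : ℕ) :
    ((∃ w, IsWalk E j w β v) ↔ (d ≤ j ∧ l ∣ (j - d))) ∧
    ∀ w w', IsWalk E j w β v → IsWalk E j w' β v → ∀ t ≤ j, w t = w' t := by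
  have enter : ∀ k w, IsWalk E k w β v → ∃ t < k, w t = x0 ∧ w (t + 1) = y0 ∧
      ∀ s, t + 1 ≤ s → s ≤ k → w s ∈ U := by
    intro k w hw
    obtain ⟨t, ht, h1, h2⟩ := walk_cross hw U hβ hv
    obtain ⟨e1, e2⟩ := H1 _ _ h1 h2 (hw.2.2 t ht)
    refine ⟨t, ht, e1, e2, fun s hs => ?_⟩
    induction s, hs using Nat.le_induction with
    | base => intro _; exact h2
    | succ s hs ih => intro hsk; exact hclosed _ _ (ih (by omega)) (hw.2.2 s (by omega))
  obtain ⟨a, ha, pa, pa', pU⟩ := enter d p hp.1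
  have hpa : IsWalk E a p β x0 := pa ▸ walk_prefix hp.1 ha.le
  have enter2 : ∀ k w, IsWalk E k w β v → a < k ∧ w (a + 1) = y0 ∧
      (∀ s, a + 1 ≤ s → s ≤ k → w s ∈ U) ∧ ∀ t ≤ a, w t = p t := by
    intro k w hw
    obtain ⟨t, ht, e1, e2, e3⟩ := enter k w hw
    have hwt : IsWalk E t w β x0 := e1 ▸ walk_prefix hw ht.le
    obtain ⟨rfl, h⟩ := H3 _ _ _ _ hwt hpa
    exact ⟨ht, e2, e3, h⟩
  refine ⟨⟨?_, ?_⟩, ?_⟩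
  · rintro ⟨w, hw⟩
    obtain ⟨b1, b2, b3, b4⟩ := enter2 j w hw
    rcases lt_or_ge j d with hlt | hge
    · exfalso
      have := back_unique H2 hw hp.1 (j - (a + 1)) (by omega) (by omega)
        (fun t h1 h2 => b3 t (by omega) h2) (fun t h1 h2 => pU t (by omega) h2)
      rw [show j - (j - (a + 1)) = a + 1 by omega, b2, ← pa'] at this
      have := hp.2 _ (by omega) _ (by omega) this
      omega
    · refine ⟨hge, ?_⟩
      have := back_unique H2 hw hp.1 (d - (a + 1)) (by omega) (by omega)
        (fun t h1 h2 => b3 t (by omega) h2) (fun t h1 h2 => pU t (by omega) h2)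
      rw [show d - (d - (a + 1)) = a + 1 by omega, pa'] at this
      have h6 := walk_suffix (walk_prefix hw (a := j - (d - (a + 1))) (by omega)) (a := a + 1)
        (by omega)
      rw [this, b2] at h6
      have := H4 _ _ h6
      rwa [show j - (d - (a + 1)) - (a + 1) = j - d by omega] at this
  · rintro ⟨hdj, q, hq⟩
    have loop : ∀ q : ℕ, ∃ w, IsWalk E (l * q) w y0 y0 := by
      intro q
      induction q with
      | zero => exact ⟨fun _ => y0, rfl, rfl, by simp⟩
      | succ q ih =>
        obtain ⟨w, hw⟩ := ih
        obtain ⟨w', hw'⟩ := H5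
        exact ⟨_, by rw [Nat.mul_succ]; exact walk_append hw hw'⟩
    obtain ⟨w, hw⟩ := loop q
    have h1 : IsWalk E (a + 1) p β y0 := pa' ▸ walk_prefix hp.1 ha
    have h2 : IsWalk E (d - (a + 1)) (fun t => p (a + 1 + t)) y0 v := pa' ▸ walk_suffix hp.1 ha
    have h3 := walk_append (walk_append h1 hw) h2
    rw [show a + 1 + l * q + (d - (a + 1)) = j by omega] at h3
    exact ⟨_, h3⟩
  · intro w w' hw hw' t ht
    obtain ⟨b1, b2, b3, b4⟩ := enter2 j w hw
    obtain ⟨b1', b2', b3', b4'⟩ := enter2 j w' hw'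
    rcases le_or_gt t a with h | h
    · rw [b4 t h, b4' t h]
    · have := back_unique H2 hw hw' (j - t) (by omega) (by omega)
        (fun t h1 h2 => b3 t (by omega) h2) (fun t h1 h2 => b3' t (by omega) h2)
      rwa [show j - (j - t) = t by omega] at this

end Helpers

theorem single_cycle_unique {V : Type*} {C : Set V} {E : Set (V × V)} (h : IsSingleCycleOn C E) :
    (∀ x x' y, x ∈ C → x' ∈ C → y ∈ C → (x, y) ∈ E → (x', y) ∈ E → x = x') ∧
    (∀ x y y', x ∈ C → y ∈ C → y' ∈ C → (x, y) ∈ E → (x, y') ∈ E → y = y') := by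
  obtain ⟨l, w, hl, hinj, hset, hE⟩ := h
  constructor
  · intro x x' y hx hx' hy h1 h2
    obtain ⟨t, ht, e⟩ := (hE (x, y)).1 ⟨h1, hx, hy⟩
    obtain ⟨s, hs, e'⟩ := (hE (x', y)).1 ⟨h2, hx', hy⟩
    simp only [Prod.mk.injEq] at e e'
    have := hinj _ (Nat.mod_lt _ hl) _ (Nat.mod_lt _ hl) (e.2.symm.trans e'.2)
    have h3 : t ≡ s [MOD l] := Nat.ModEq.add_right_cancel' 1 this
    have : t = s := by
      have h4 : t % l = s % l := h3
      rwa [Nat.mod_eq_of_lt ht, Nat.mod_eq_of_lt hs] at h4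
    rw [e.1, e'.1, this]
  · intro x y y' hx hy hy' h1 h2
    obtain ⟨t, ht, e⟩ := (hE (x, y)).1 ⟨h1, hx, hy⟩
    obtain ⟨s, hs, e'⟩ := (hE (x, y')).1 ⟨h2, hx, hy'⟩
    simp only [Prod.mk.injEq] at e e'
    have := hinj _ ht _ hs (e.1.symm.trans e'.1)
    rw [e.2, e'.2, this]

/-- Lemma 3 of the paper: in a reduced graph, for every nontrivial
strong component `C` (a directed cycle `c` of length `l`) and every `j ≥ 1`,
`V_p⁺(j) = {α_i ∈ V_p⁺ : dep(α_i) ≤ j, ℓ_p ∣ j − dep(α_i)}`, and every node of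
`V_p⁺(j)` is reached from `β` by exactly one walk of length `j`. The function `dep`
records the length of the unique path from `β` to each node. -/
theorem stmt10 {n : ℕ} (hn : 1 ≤ n) (E : Set (Node n × Node n))
    (hred : ReducedGraph n E)
    (C : Set (Node n)) (hC : C ∈ SkelNodes E) (hCnontriv : (C, C) ∈ SkelEdges E)
    (l : ℕ) (c : ℕ → Node n) (u0 : Node n) (hu0 : u0 ∈ C)
    (hcyc : IsCycle E l c u0) (hcycset : {x | ∃ t < l, c t = x} = C)
    (dep : Node n → ℕ)
    (hdep : ∀ v : Node n, ∃ p : ℕ → Node n, IsPath E (dep v) p (none : Node n) v)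
    (j : ℕ) (hj : 1 ≤ j) :
    VpPlus E C ∩ VSet E j
        = {v ∈ VpPlus E C | dep v ≤ j ∧ l ∣ (j - dep v)} ∧
    ∀ v ∈ VpPlus E C ∩ VSet E j, ∀ w w' : ℕ → Node n,
      IsWalk E j w (none : Node n) v → IsWalk E j w' (none : Node n) v →
        ∀ t ≤ j, w t = w' t := by
  obtain ⟨⟨hnone, -⟩, htree, -, hun, hnt⟩ := hred
  have hCu : ∀ x ∈ C, C = StrongComp E x := fun x hx => skel_eq hC hx
  obtain ⟨⟨C', ⟨hC'N, hC'⟩, -, -, x0, hx0, y0, hy0, hxy0⟩, hsc⟩ := hnt C hCnontriv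
  simp only at hx0 hy0
  obtain ⟨predC, succC⟩ := single_cycle_unique hsc
  have entry := fun {x y z z' : Node n} => entry_unique (x := x) (y := y) (z := z) (z' := z')
    htree hun
  -- a nontrivial component reaching a core node is impossible
  have loopcyc : ∀ D : Set (Node n), (D, D) ∈ SkelEdges E → OnCycle (SkelEdges E) D := by
    intro D hD
    exact ⟨1, fun _ => D, le_rfl, ⟨rfl, rfl, fun _ _ => hD⟩, fun s hs t ht _ => by omega⟩
  have core : ∀ a b : Node n, (StrongComp E a, StrongComp E a) ∈ SkelEdges E →
      Reachable E a b → StrongComp E b ∉ CycSucc (SkelEdges E) → False := by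
    intro a b ha hab hb
    exact hb ⟨_, loopcyc _ ha, skel_reach hab⟩
  have hx0core : StrongComp E x0 ∉ CycSucc (SkelEdges E) := by rwa [← skel_eq hC'N hx0]
  have hnotC : ∀ x, StrongComp E x ∉ CycSucc (SkelEdges E) → x ∉ VpPlus E C := by
    rintro x hx ⟨u, hu, hux⟩
    exact core u x (by rw [← hCu u hu]; exact hCnontriv) hux hx
  have hCU : ∀ x ∈ C, x ∈ VpPlus E C := fun x hx => ⟨x, hx, reach_refl x⟩
  have hUC : ∀ x ∈ VpPlus E C, ∀ y ∈ C, Reachable E x y → x ∈ C := by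
    rintro x ⟨u, hu, hux⟩ y hy hxy
    rw [hCu u hu] at hy ⊢
    exact ⟨hux, reach_trans hxy hy.2⟩
  -- trivial components have unique predecessors
  have triv : ∀ x x' y : Node n, (StrongComp E y, StrongComp E y) ∉ SkelEdges E →
      (x, y) ∈ E → (x', y) ∈ E → x = x' := by
    intro x x' y hy h1 h2
    have aux : ∀ x, (x, y) ∈ E → x ∉ StrongComp E y := fun x h hx =>
      hy ⟨⟨y, rfl⟩, ⟨y, rfl⟩, x, hx, y, comp_self y, h⟩
    exact (entry h1 h2 (comp_self y) (aux _ h1) (aux _ h2)).1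
  have hN : ∀ y ∈ VpPlus E C, (StrongComp E y, StrongComp E y) ∈ SkelEdges E → y ∈ C := by
    intro y hy hyy
    by_contra hyC
    obtain ⟨⟨D, ⟨hDN, hD⟩, -, -, x', hx', y', hy', hxy'⟩, -⟩ := hnt _ hyy
    simp only at hx' hy'
    rw [skel_eq hDN hx'] at hD
    obtain ⟨u, hu, k, w, hw⟩ := hy
    have huy : u ∉ StrongComp E y := by
      intro h
      exact hyC (hUC y ⟨u, hu, k, w, hw⟩ u hu h.1)
    obtain ⟨t, ht, h1, h2⟩ := walk_cross hw (StrongComp E y) huy (comp_self y)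
    have h3 := comp_eq h2
    have hx'n : x' ∉ StrongComp E y := by
      intro h
      refine core x' x' ?_ (reach_refl _) hD
      rw [comp_eq h]; exact hyy
    have := (entry (hw.2.2 t ht) hxy' (by rw [h3]; exact hy') (by rwa [h3]) (by rwa [h3])).1
    refine hnotC x' hD ⟨u, hu, ?_⟩
    rw [← this, ← hw.1]
    exact walk_reach hw (Nat.zero_le _) ht.le
  have hclosed : ∀ x y, x ∈ VpPlus E C → (x, y) ∈ E → y ∈ VpPlus E C := by
    rintro x y ⟨u, hu, hux⟩ h
    exact ⟨u, hu, reach_trans hux (reach_edge h)⟩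
  have hlast : ∀ u v : Node n, Reachable E u v → u = v ∨ ∃ z, Reachable E u z ∧ (z, v) ∈ E := by
    rintro u v ⟨k, w, hw⟩
    rcases k with _ | k
    · left; rw [← hw.1, hw.2.1]
    · right
      refine ⟨w k, ⟨k, w, walk_prefix hw (by omega)⟩, ?_⟩
      have := hw.2.2 k (by omega)
      rwa [hw.2.1] at this
  have hβC : (none : Node n) ∉ C := by
    intro h
    obtain ⟨-, -, a, ha, b, hb, hab⟩ := hCnontriv
    simp only at ha hb
    rw [hCu _ h] at hb
    rcases hlast _ _ hb.2 with h1 | ⟨z, -, hz⟩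
    · exact hnone _ hab h1
    · exact hnone _ hz rfl
  have hβ : (none : Node n) ∉ VpPlus E C := by
    rintro ⟨u, hu, hr⟩
    rcases hlast _ _ hr with h1 | ⟨z, -, hz⟩
    · exact hβC (h1 ▸ hu)
    · exact hnone _ hz rfl
  have H1 : ∀ x y, x ∉ VpPlus E C → y ∈ VpPlus E C → (x, y) ∈ E → x = x0 ∧ y = y0 := by
    intro x y hx hy hxy
    have hyC : y ∈ C := by
      by_contra hyC
      obtain ⟨u, hu, hr⟩ := hy
      rcases hlast _ _ hr with h1 | ⟨z, hz, hzy⟩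
      · exact hyC (h1 ▸ hu)
      · have := triv x z y (fun h => hyC (hN y ⟨u, hu, hr⟩ h)) hxy hzy
        exact hx (this ▸ ⟨u, hu, hz⟩)
    have e := hCu y hyC
    exact entry hxy hxy0 (e ▸ hy0) (fun h => hx (hCU _ (e ▸ h)))
      (fun h => hnotC x0 hx0core (hCU _ (e ▸ h)))
  have H2 : ∀ x x' y, x ∈ VpPlus E C → x' ∈ VpPlus E C → (x, y) ∈ E → (x', y) ∈ E → x = x' := by
    intro x x' y hx hx' h h'
    by_cases hyC : y ∈ C
    · exact predC x x' y (hUC _ hx y hyC (reach_edge h)) (hUC _ hx' y hyC (reach_edge h')) hyC h h'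
    · exact triv x x' y (fun hh => hyC (hN y (hclosed _ _ hx h) hh)) h h'
  have H3' : ∀ k k' w w', IsWalk E k w none x0 → IsWalk E k' w' none x0 → 
      ∀ s, s ≤ k → s ≤ k' → w (k - s) = w' (k' - s) := by
    intro k k' w w' h h' s
    induction s with
    | zero => intro _ _; simp [h.2.1, h'.2.1]
    | succ s ih =>
      intro hs hs'
      have := ih (by omega) (by omega)
      have e1 := h.2.2 (k - (s + 1)) (by omega)
      have e2 := h'.2.2 (k' - (s + 1)) (by omega)
      rw [show k - (s + 1) + 1 = k - s by omega] at e1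
      rw [show k' - (s + 1) + 1 = k' - s by omega, ← this] at e2
      refine triv _ _ _ (fun hh => core _ x0 hh ?_ hx0core) e1 e2
      rw [← h.2.1]
      exact walk_reach h (by omega) le_rfl
  have H3'' : ∀ k k' w w', IsWalk E k w none x0 → IsWalk E k' w' none x0 → ¬ k < k' := by
    intro k k' w w' h h' hlt
    have := H3' k k' w w' h h' k le_rfl hlt.le
    rw [Nat.sub_self, h.1] at this
    have e := h'.2.2 (k' - k - 1) (by omega)
    rw [show k' - k - 1 + 1 = k' - k by omega, ← this] at e
    exact hnone _ e rfl
  have H3 : ∀ k k' w w', IsWalk E k w none x0 → IsWalk E k' w' none x0 →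
      k = k' ∧ ∀ t ≤ k, w t = w' t := by
    intro k k' w w' h h'
    have a1 := H3'' _ _ _ _ h h'
    have a2 := H3'' _ _ _ _ h' h
    have : k = k' := by omega
    subst this
    refine ⟨rfl, fun t ht => ?_⟩
    have := H3' k k w w' h h' (k - t) (by omega) (by omega)
    rwa [show k - (k - t) = t by omega] at this
  obtain ⟨hl, hcw, hcinj⟩ := hcyc
  have hcC : ∀ t < l, c t ∈ C := fun t ht => by rw [← hcycset]; exact ⟨t, ht, rfl⟩
  have hcE : ∀ m, (c (m % l), c ((m + 1) % l)) ∈ E := by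
    intro m
    have hm := Nat.mod_lt m hl
    have := hcw.2.2 (m % l) hm
    by_cases h : m % l + 1 = l
    · have e : (m + 1) % l = 0 := by
        rw [Nat.add_mod_eq_ite]; 
        rcases Nat.lt_or_ge 1 l with h1 | h1
        · rw [Nat.mod_eq_of_lt h1]; simp [h]
        · have : l = 1 := by omega
          subst this; simp [Nat.mod_one]
      rw [e, hcw.1, ← hcw.2.1]; rwa [h] at this
    · have e : (m + 1) % l = m % l + 1 := by
        rw [Nat.add_mod, Nat.mod_eq_of_lt (show 1 < l by omega), Nat.mod_eq_of_lt (by omega)]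
      rw [e]; exact this
  obtain ⟨s0, hs0, hcs0⟩ : ∃ t < l, c t = y0 := by
    have : y0 ∈ {x | ∃ t < l, c t = x} := by rw [hcycset]; exact hy0
    exact this
  have H4 : ∀ m w, IsWalk E m w y0 y0 → l ∣ m := by
    intro m w hw
    have hin : ∀ t ≤ m, w t ∈ C := by
      intro t ht
      rw [hCu y0 hy0]
      constructor
      · have := walk_reach hw (Nat.zero_le t) ht
        rwa [hw.1] at this
      · have := walk_reach hw ht le_rfl
        rwa [hw.2.1] at this
    have key : ∀ t ≤ m, w t = c ((s0 + t) % l) := by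
      intro t
      induction t with
      | zero => intro _; rw [hw.1, Nat.add_zero, Nat.mod_eq_of_lt hs0, hcs0]
      | succ t ih =>
        intro ht
        have e := hw.2.2 t (by omega)
        have e' := hcE (s0 + t)
        rw [← ih (by omega)] at e'
        exact succC _ _ _ (hin t (by omega)) (hin _ ht) (hcC _ (Nat.mod_lt _ hl)) e e'
    have h1 := key m le_rfl
    rw [hw.2.1, ← hcs0] at h1
    have h2 := hcinj _ hs0 _ (Nat.mod_lt _ hl) h1
    have h3 : s0 + m ≡ s0 + 0 [MOD l] := by
      show (s0 + m) % l = (s0 + 0) % l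
      rw [← h2, Nat.add_zero, Nat.mod_eq_of_lt hs0]
    exact (Nat.modEq_zero_iff_dvd).1 (Nat.ModEq.add_left_cancel' s0 h3)
  have H5 : ∃ w, IsWalk E l w y0 y0 := by
    refine ⟨fun t => c ((s0 + t) % l), ?_, ?_, fun t _ => hcE (s0 + t)⟩
    · show c ((s0 + 0) % l) = y0
      rw [Nat.add_zero, Nat.mod_eq_of_lt hs0, hcs0]
    · show c ((s0 + l) % l) = y0
      rw [Nat.add_mod_right, Nat.mod_eq_of_lt hs0, hcs0]
  have main := fun (v : Node n) (hv : v ∈ VpPlus E C) =>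
    abstract_main hclosed hβ H1 H2 H3 H4 H5 hv (hdep v).choose_spec j
  refine ⟨?_, fun v hv => (main v hv.1).2⟩
  ext v
  exact ⟨fun h => ⟨h.1, (main v h.1).1.1 h.2⟩, fun h => ⟨h.1, (main v h.1).1.2 h.2⟩⟩
end
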